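/- For b₀ > 1/2 and 0 ≤ s ≤ 1/2, the estimate ‖J_-^s(u,v)‖_{L²_{x,t}} ≤ c‖u‖_{X^+_{0,b₀}}‖v‖_{X^+_{0,b}} holds provided b > 1/4 + s/2, where u, v are functions on ℝ × ℝ. -/

import Mathlib

open MeasureTheory
open scoped ENNReal

/-- Japanese bracket. -/
noncomputable def jb (x : ℝ) : ℝ := Real.sqrt (1 + x ^ 2)

/-- The `X^+_{0,b}` norm on the Fourier side: weight `⟨τ+ξ²⟩^b`. -/
noncomputable def X0norm (b : ℝ) (F : ℝ × ℝ → ℝ≥0∞) : ℝ≥0∞ :=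
  (∫⁻ p : ℝ × ℝ, ENNReal.ofReal (jb (p.2 + p.1 ^ 2) ^ (2 * b)) * F p ^ 2) ^ ((1 : ℝ) / 2)

/-- The Fourier transform of `J₋^s(u,v)`: the weighted convolution
`∫_{ξ₁+ξ₂=ξ, τ₁+τ₂=τ} ⟨ξ₁−ξ₂⟩^s F(ξ₁,τ₁) G(ξ₂,τ₂)` of the Fourier data `F, G`. -/
noncomputable def JminusConv (s : ℝ) (F G : ℝ × ℝ → ℝ≥0∞) : ℝ × ℝ → ℝ≥0∞ := fun p =>
  ∫⁻ ξ₁ : ℝ, ∫⁻ τ₁ : ℝ,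
    ENNReal.ofReal (jb (ξ₁ - (p.1 - ξ₁)) ^ s) * F (ξ₁, τ₁) * G (p.1 - ξ₁, p.2 - τ₁)

open scoped NNReal

/-!
Multiplying and dividing by the weights of the two `X^+_{0,·}` norms turns `J₋^s` into a convolution
of two `L²` functions against a kernel. By Cauchy–Schwarz and the translation invariance of Lebesgue
measure, it suffices that the square of this kernel has bounded integral in `(ξ₁, τ₁)`, uniformly
in `(ξ, τ)`.

Take the modulation `m = τ₁ + ξ₁²` of the first factor and `x = ξ₁ - ξ/2` as coordinates: then
`ξ₁ - ξ₂ = 2x`, the modulation of the second factor is `2x² + A` with `A` independent of `x`, and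
the integral over `m` converges since `2b₀ > 1`. It remains to bound
`∫ ⟨2x⟩^{2s} ⟨2x² + A⟩^{-2b} dx` uniformly in `A`. Comparing `⟨2x⟩²` with `⟨2x² + A⟩` bounds the
integrand by the sum of `⟨2x⟩^{2s-4b}`, which is integrable, and `⟨2x⟩ ⟨2x² + A⟩^{s-1/2-2b}`, where
the factor `⟨2x⟩` pays for the substitution `y = 2x² + A`.
-/

section Lebesgue

lemma sq_lintegral_mul_le {α : Type*} [MeasurableSpace α] (μ : Measure α) {f g : α → ℝ≥0∞}
    (hf : AEMeasurable f μ) (hg : AEMeasurable g μ) :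
    (∫⁻ a, f a * g a ∂μ) ^ 2 ≤ (∫⁻ a, f a ^ 2 ∂μ) * ∫⁻ a, g a ^ 2 ∂μ := by
  have holder := ENNReal.lintegral_mul_le_Lp_mul_Lq μ Real.HolderConjugate.two_two hf hg
  calc (∫⁻ a, f a * g a ∂μ) ^ 2
      ≤ ((∫⁻ a, f a ^ (2 : ℝ) ∂μ) ^ (1 / 2 : ℝ) * (∫⁻ a, g a ^ (2 : ℝ) ∂μ) ^ (1 / 2 : ℝ)) ^ 2 :=
        pow_le_pow_left' holder 2
    _ = (∫⁻ a, f a ^ 2 ∂μ) * ∫⁻ a, g a ^ 2 ∂μ := by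
        rw [mul_pow, ← ENNReal.rpow_mul_natCast, ← ENNReal.rpow_mul_natCast]
        norm_num

section Group

variable {E : Type*} [AddGroup E] [MeasurableSpace E] [MeasurableAdd₂ E] [MeasurableNeg E]
  {μ : Measure E} [SFinite μ] [μ.IsAddRightInvariant]

lemma aemeasurable_mul_comp_sub {f g : E → ℝ≥0∞} (hf : AEMeasurable f μ) (hg : AEMeasurable g μ) :
    AEMeasurable (fun p : E × E => f p.2 * g (p.1 - p.2)) (μ.prod μ) :=
  hf.comp_snd.mul
    (hg.comp_quasiMeasurePreserving (quasiMeasurePreserving_sub_of_right_invariant μ μ))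

lemma lintegral_lintegral_mul_sub {f g : E → ℝ≥0∞} (hf : AEMeasurable f μ)
    (hg : AEMeasurable g μ) :
    ∫⁻ x, ∫⁻ y, f y * g (x - y) ∂μ ∂μ = (∫⁻ x, f x ∂μ) * ∫⁻ x, g x ∂μ := by
  rw [lintegral_lintegral_swap (aemeasurable_mul_comp_sub hf hg)]
  calc ∫⁻ y, ∫⁻ x, f y * g (x - y) ∂μ ∂μ
      = ∫⁻ y, f y * ∫⁻ x, g x ∂μ ∂μ := by
        refine lintegral_congr fun y => ?_
        have hg_sub : AEMeasurable (fun x => g (x - y)) μ :=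
          hg.comp_quasiMeasurePreserving (measurePreserving_sub_right μ y).quasiMeasurePreserving
        rw [lintegral_const_mul'' _ hg_sub, lintegral_sub_right_eq_self]
    _ = (∫⁻ x, f x ∂μ) * ∫⁻ x, g x ∂μ := lintegral_mul_const'' _ hf

lemma lintegral_sq_lintegral_kernel_mul_le {K : E → E → ℝ≥0∞} {f g : E → ℝ≥0∞} {C : ℝ≥0∞}
    (hK : ∀ x, AEMeasurable (K x) μ) (hKC : ∀ x, ∫⁻ y, K x y ^ 2 ∂μ ≤ C)
    (hf : AEMeasurable f μ) (hg : AEMeasurable g μ) :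
    ∫⁻ x, (∫⁻ y, K x y * (f y * g (x - y)) ∂μ) ^ 2 ∂μ ≤
      C * ((∫⁻ x, f x ^ 2 ∂μ) * ∫⁻ x, g x ^ 2 ∂μ) := by
  have hfg (x : E) : AEMeasurable (fun y => f y * g (x - y)) μ :=
    hf.mul (hg.comp_quasiMeasurePreserving (quasiMeasurePreserving_sub_left_of_right_invariant μ x))
  have hfg_sq := aemeasurable_mul_comp_sub (hf.pow_const 2) (hg.pow_const 2)
  calc ∫⁻ x, (∫⁻ y, K x y * (f y * g (x - y)) ∂μ) ^ 2 ∂μ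
      ≤ ∫⁻ x, C * ∫⁻ y, f y ^ 2 * g (x - y) ^ 2 ∂μ ∂μ := by
        refine lintegral_mono fun x => ?_
        simp only [← mul_pow]
        exact (sq_lintegral_mul_le μ (hK x) (hfg x)).trans (by gcongr; exact hKC x)
    _ = C * ∫⁻ x, ∫⁻ y, f y ^ 2 * g (x - y) ^ 2 ∂μ ∂μ :=
        lintegral_const_mul'' _ hfg_sq.lintegral_prod_right'
    _ = C * ((∫⁻ x, f x ^ 2 ∂μ) * ∫⁻ x, g x ^ 2 ∂μ) := by
        rw [lintegral_lintegral_mul_sub (hf.pow_const 2) (hg.pow_const 2)]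

end Group

lemma lintegral_abs_deriv_mul_comp_le_two_mul {f f' : ℝ → ℝ} {S : Set ℝ} (hS : MeasurableSet S)
    (hf : ∀ x, HasDerivAt f (f' x) x) (hinj : S.InjOn f) (hinj_compl : Sᶜ.InjOn f)
    (g : ℝ → ℝ≥0∞) :
    ∫⁻ x, ENNReal.ofReal |f' x| * g (f x) ≤ 2 * ∫⁻ y, g y := by
  have piece {T : Set ℝ} (hT : MeasurableSet T) (hTinj : T.InjOn f) :
      ∫⁻ x in T, ENNReal.ofReal |f' x| * g (f x) ≤ ∫⁻ y, g y := by
    rw [← lintegral_image_eq_lintegral_abs_deriv_mul hT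
      (fun x _ => (hf x).hasDerivWithinAt) hTinj]
    exact setLIntegral_le_lintegral _ _
  rw [← lintegral_add_compl _ hS, two_mul]
  exact add_le_add (piece hS hinj) (piece hS.compl hinj_compl)

lemma lintegral_abs_mul_comp_quadratic_le {a : ℝ} (ha : a ≠ 0) (c : ℝ) (g : ℝ → ℝ≥0∞) :
    ∫⁻ x : ℝ, ENNReal.ofReal |2 * a * x| * g (a * x ^ 2 + c) ≤ 2 * ∫⁻ y, g y := by
  have abs_eq {x y : ℝ} (h : a * x ^ 2 + c = a * y ^ 2 + c) : |x| = |y| :=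
    sq_eq_sq_iff_abs_eq_abs x y |>.1 (mul_left_cancel₀ ha (add_right_cancel h))
  refine lintegral_abs_deriv_mul_comp_le_two_mul (S := Set.Ici 0) measurableSet_Ici
    (fun x => ?_) (fun x (hx : 0 ≤ x) y (hy : 0 ≤ y) h => ?_) (fun x hx y hy h => ?_) g
  · exact (((hasDerivAt_pow 2 x).const_mul a).add_const c).congr_deriv (by norm_num; ring)
  · simpa [abs_of_nonneg hx, abs_of_nonneg hy] using abs_eq h
  · rw [Set.compl_Ici, Set.mem_Iio] at hx hy
    simpa [abs_of_neg hx, abs_of_neg hy] using abs_eq h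

end Lebesgue

lemma rpow_mul_rpow_neg_le_add {q r α β : ℝ} (hq : 0 < q) (hr : 0 < r) (hα : α ≤ 1)
    (hβ : 0 ≤ β) :
    q ^ α * r ^ (-β) ≤ q ^ (α - 2 * β) + q * r ^ ((α - 1) / 2 - β) := by
  have sq_rpow (t : ℝ) : (q ^ 2) ^ t = q ^ (2 * t) := by
    rw [Real.rpow_mul hq.le, Real.rpow_two]
  rcases le_total (q ^ 2) r with hqr | hrq
  · calc q ^ α * r ^ (-β)
        ≤ q ^ α * (q ^ 2) ^ (-β) := by
          gcongr q ^ α * ?_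
          exact Real.rpow_le_rpow_of_nonpos (by positivity) hqr (by linarith)
      _ = q ^ (α - 2 * β) := by rw [sq_rpow, ← Real.rpow_add hq]; ring_nf
      _ ≤ q ^ (α - 2 * β) + q * r ^ ((α - 1) / 2 - β) := le_add_of_nonneg_right (by positivity)
  · calc q ^ α * r ^ (-β)
        = q * (q ^ 2) ^ ((α - 1) / 2) * r ^ (-β) := by
          rw [sq_rpow, mul_comm q, ← Real.rpow_add_one hq.ne']
          ring_nf
      _ ≤ q * r ^ ((α - 1) / 2) * r ^ (-β) := by
          gcongr q * ?_ * _
          exact Real.rpow_le_rpow_of_nonpos hr hrq (by linarith)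
      _ = q * r ^ ((α - 1) / 2 - β) := by rw [mul_assoc, ← Real.rpow_add hr, ← sub_eq_add_neg]
      _ ≤ q ^ (α - 2 * β) + q * r ^ ((α - 1) / 2 - β) := le_add_of_nonneg_left (by positivity)

section Bracket

lemma one_le_jb (x : ℝ) : 1 ≤ jb x :=
  Real.one_le_sqrt.2 (le_add_of_nonneg_right (sq_nonneg x))

lemma jb_pos (x : ℝ) : 0 < jb x := one_pos.trans_le (one_le_jb x)

lemma jb_le_jb {x y : ℝ} (h : |x| ≤ |y|) : jb x ≤ jb y :=
  Real.sqrt_le_sqrt (add_le_add_right (sq_le_sq.2 h) 1)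

/-- The power `⟨x⟩ ^ r` of the Japanese bracket as an extended nonnegative real, the form in which
the weights enter the Lebesgue integrals. -/
noncomputable def jbWeight (r x : ℝ) : ℝ≥0∞ := ENNReal.ofReal (jb x ^ r)

@[fun_prop]
lemma measurable_jbWeight (r : ℝ) : Measurable (jbWeight r) := by
  unfold jbWeight jb
  fun_prop

lemma jbWeight_sq (r x : ℝ) : jbWeight r x ^ 2 = jbWeight (2 * r) x := by
  unfold jbWeight
  rw [← ENNReal.ofReal_pow (Real.rpow_nonneg (jb_pos x).le r),
    ← Real.rpow_mul_natCast (jb_pos x).le, mul_comm, Nat.cast_two]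

lemma jbWeight_neg_mul_jbWeight (r x : ℝ) : jbWeight (-r) x * jbWeight r x = 1 := by
  unfold jbWeight
  rw [← ENNReal.ofReal_mul (Real.rpow_nonneg (jb_pos x).le _), ← Real.rpow_add (jb_pos x),
    neg_add_cancel, Real.rpow_zero, ENNReal.ofReal_one]

lemma jbWeight_le_jbWeight_of_nonpos {r x y : ℝ} (hr : r ≤ 0) (h : |x| ≤ |y|) :
    jbWeight r y ≤ jbWeight r x :=
  ENNReal.ofReal_le_ofReal (Real.rpow_le_rpow_of_nonpos (jb_pos x) (jb_le_jb h) hr)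

lemma jbWeight_le_one_of_nonpos {r : ℝ} (hr : r ≤ 0) (x : ℝ) : jbWeight r x ≤ 1 :=
  ENNReal.ofReal_le_one.2 (Real.rpow_le_one_of_one_le_of_nonpos (one_le_jb x) hr)

lemma lintegral_jbWeight_lt_top {r : ℝ} (hr : r < -1) : ∫⁻ x, jbWeight r x < ∞ := by
  have integrable : Integrable fun x : ℝ => (1 + ‖x‖ ^ 2) ^ (-(-r) / 2) :=
    integrable_rpow_neg_one_add_norm_sq (by rw [Module.finrank_self, Nat.cast_one]; linarith)
  refine integrable.lintegral_lt_top.trans_eq' (lintegral_congr fun x => ?_)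
  rw [jbWeight, jb, Real.norm_eq_abs, sq_abs, neg_neg, Real.rpow_div_two_eq_sqrt _ (by positivity)]

lemma jbWeight_mul_jbWeight_neg_le_add {α β : ℝ} (hα : α ≤ 1) (hβ : 0 ≤ β) (x y : ℝ) :
    jbWeight α x * jbWeight (-β) y ≤
      jbWeight (α - 2 * β) x + jbWeight 1 x * jbWeight ((α - 1) / 2 - β) y := by
  have hx (t : ℝ) : 0 ≤ jb x ^ t := Real.rpow_nonneg (jb_pos x).le t
  have hy (t : ℝ) : 0 ≤ jb y ^ t := Real.rpow_nonneg (jb_pos y).le t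
  unfold jbWeight
  rw [← ENNReal.ofReal_mul (hx _), ← ENNReal.ofReal_mul (hx _),
    ← ENNReal.ofReal_add (hx _) (mul_nonneg (hx _) (hy _)), Real.rpow_one]
  exact ENNReal.ofReal_le_ofReal (rpow_mul_rpow_neg_le_add (jb_pos x) (jb_pos y) hα hβ)

lemma lintegral_jbWeight_one_mul_comp_quadratic_le {g : ℝ → ℝ≥0∞} (hg : ∀ y, g y ≤ 1) (A : ℝ) :
    ∫⁻ x, jbWeight 1 (2 * x) * g (2 * x ^ 2 + A) ≤ 6 + 2 * ∫⁻ y, g y := by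
  have near {x : ℝ} (hx : x ∈ Set.Icc (-1) 1) : jbWeight 1 (2 * x) ≤ 3 := by
    rw [jbWeight, Real.rpow_one, ENNReal.ofReal_le_ofNat, jb, Real.sqrt_le_left (by norm_num)]
    nlinarith [hx.1, hx.2]
  have far {x : ℝ} (hx : x ∉ Set.Icc (-1) 1) : jbWeight 1 (2 * x) ≤ ENNReal.ofReal |2 * 2 * x| := by
    have one_le : 1 ≤ x ^ 2 := (one_le_sq_iff_one_le_abs x).2 (by
      rw [Set.mem_Icc, ← abs_le, not_le] at hx
      exact hx.le)
    rw [jbWeight, Real.rpow_one]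
    exact ENNReal.ofReal_le_ofReal (Real.sqrt_le_iff.2
      ⟨abs_nonneg _, by rw [sq_abs]; linarith⟩)
  rw [← lintegral_add_compl _ (measurableSet_Icc (a := (-1 : ℝ)) (b := 1))]
  gcongr ?_ + ?_
  · calc ∫⁻ x in Set.Icc (-1) 1, jbWeight 1 (2 * x) * g (2 * x ^ 2 + A)
        ≤ ∫⁻ _ in Set.Icc (-1 : ℝ) 1, 3 * 1 :=
          setLIntegral_mono measurable_const fun x hx => mul_le_mul' (near hx) (hg _)
      _ = 6 := by
          rw [setLIntegral_const, Real.volume_Icc]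
          norm_num
  · calc ∫⁻ x in (Set.Icc (-1) 1)ᶜ, jbWeight 1 (2 * x) * g (2 * x ^ 2 + A)
        ≤ ∫⁻ x in (Set.Icc (-1) 1)ᶜ, ENNReal.ofReal |2 * 2 * x| * g (2 * x ^ 2 + A) :=
          setLIntegral_mono' measurableSet_Icc.compl fun x hx => by gcongr; exact far hx
      _ ≤ ∫⁻ x, ENNReal.ofReal |2 * 2 * x| * g (2 * x ^ 2 + A) := setLIntegral_le_lintegral _ _
      _ ≤ 2 * ∫⁻ y, g y := lintegral_abs_mul_comp_quadratic_le two_ne_zero A g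

lemma lintegral_jbWeight_mul_jbWeight_quadratic_le {α β : ℝ} (hα : α ≤ 1) (hβ : 0 ≤ β)
    (hαβ : α ≤ 2 * β) (A : ℝ) :
    ∫⁻ x, jbWeight α (2 * x) * jbWeight (-β) (2 * x ^ 2 + A) ≤
      (∫⁻ x, jbWeight (α - 2 * β) x) + (6 + 2 * ∫⁻ y, jbWeight ((α - 1) / 2 - β) y) := by
  calc ∫⁻ x, jbWeight α (2 * x) * jbWeight (-β) (2 * x ^ 2 + A)
      ≤ ∫⁻ x, (jbWeight (α - 2 * β) x +
          jbWeight 1 (2 * x) * jbWeight ((α - 1) / 2 - β) (2 * x ^ 2 + A)) := by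
        refine lintegral_mono fun x => (jbWeight_mul_jbWeight_neg_le_add hα hβ _ _).trans ?_
        gcongr
        refine jbWeight_le_jbWeight_of_nonpos (by linarith) ?_
        rw [abs_mul, abs_two]
        linarith [abs_nonneg x]
    _ = (∫⁻ x, jbWeight (α - 2 * β) x) +
          ∫⁻ x, jbWeight 1 (2 * x) * jbWeight ((α - 1) / 2 - β) (2 * x ^ 2 + A) :=
        lintegral_add_left (by fun_prop) _
    _ ≤ _ := by
        gcongr
        exact lintegral_jbWeight_one_mul_comp_quadratic_le
          (jbWeight_le_one_of_nonpos (by linarith)) A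

lemma exists_lintegral_jbWeight_mul_jbWeight_quadratic_le {α β : ℝ} (hα : α ≤ 1) (hβ : 0 ≤ β)
    (hαβ : α + 1 < 2 * β) :
    ∃ C : ℝ≥0, ∀ A, ∫⁻ x, jbWeight α (2 * x) * jbWeight (-β) (2 * x ^ 2 + A) ≤ C := by
  have finite_left := lintegral_jbWeight_lt_top (r := α - 2 * β) (by linarith)
  have finite_right := lintegral_jbWeight_lt_top (r := (α - 1) / 2 - β) (by linarith)
  have finite : (∫⁻ x, jbWeight (α - 2 * β) x) +
      (6 + 2 * ∫⁻ y, jbWeight ((α - 1) / 2 - β) y) ≠ ∞ := by finiteness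
  exact ⟨_, fun A => (lintegral_jbWeight_mul_jbWeight_quadratic_le hα hβ (by linarith) A).trans_eq
    (ENNReal.coe_toNNReal finite).symm⟩

end Bracket

section Modulation

/-- The modulation `τ + ξ²` of the frequency `(ξ, τ)`: its signed distance in `τ` from the
characteristic parabola of the Schrödinger equation. -/
def modulation (z : ℝ × ℝ) : ℝ := z.2 + z.1 ^ 2

@[fun_prop]
lemma measurable_modulation : Measurable modulation := by
  unfold modulation
  fun_prop

lemma X0norm_eq_lintegral_sq (b : ℝ) (F : ℝ × ℝ → ℝ≥0∞) :
    X0norm b F = (∫⁻ z, (jbWeight b (modulation z) * F z) ^ 2) ^ ((1 : ℝ) / 2) := by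
  simp only [mul_pow, jbWeight_sq]
  rfl

lemma lintegral_mul_modulation_mul_modulation_sub {k g h : ℝ → ℝ≥0∞} (hk : Measurable k)
    (hg : Measurable g) (hh : Measurable h) (p : ℝ × ℝ) :
    ∫⁻ z : ℝ × ℝ, k (z.1 - (p.1 - z.1)) * g (modulation z) * h (modulation (p - z)) =
      ∫⁻ m, g m * ∫⁻ x, k (2 * x) * h (2 * x ^ 2 + (p.2 - m + p.1 ^ 2 / 2)) := by
  obtain ⟨ξ, τ⟩ := p
  calc ∫⁻ z : ℝ × ℝ, k (z.1 - (ξ - z.1)) * g (modulation z) * h (modulation ((ξ, τ) - z))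
      = ∫⁻ x, ∫⁻ t, k (x - (ξ - x)) * g (t + x ^ 2) * h (τ - t + (ξ - x) ^ 2) := by
        rw [Measure.volume_eq_prod, lintegral_prod _ (by fun_prop)]
        rfl
    _ = ∫⁻ x, ∫⁻ m, k (x - (ξ - x)) * g m * h (τ - (m - x ^ 2) + (ξ - x) ^ 2) := by
        refine lintegral_congr fun x => ?_
        rw [← lintegral_sub_right_eq_self _ (x ^ 2)]
        simp only [sub_add_cancel]
    _ = ∫⁻ m, ∫⁻ x, k (x - (ξ - x)) * g m * h (τ - (m - x ^ 2) + (ξ - x) ^ 2) :=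
        lintegral_lintegral_swap (by unfold Function.uncurry; fun_prop)
    _ = ∫⁻ m, g m * ∫⁻ x, k (2 * x) * h (2 * x ^ 2 + (τ - m + ξ ^ 2 / 2)) := by
        refine lintegral_congr fun m => ?_
        rw [← lintegral_add_right_eq_self _ (ξ / 2), ← lintegral_const_mul _ (by fun_prop)]
        refine lintegral_congr fun x => ?_
        have frequency_difference : x + ξ / 2 - (ξ - (x + ξ / 2)) = 2 * x := by ring
        have second_modulation : τ - (m - (x + ξ / 2) ^ 2) + (ξ - (x + ξ / 2)) ^ 2 =
            2 * x ^ 2 + (τ - m + ξ ^ 2 / 2) := by ring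
        rw [frequency_difference, second_modulation, mul_comm (k _), mul_assoc]

/-- The kernel `⟨ξ₁ - ξ₂⟩^s ⟨τ₁ + ξ₁²⟩^{-b₀} ⟨τ₂ + ξ₂²⟩^{-b}` of `J₋^s` acting on the weighted `L²`
data, at the output frequency `p = (ξ, τ)` and the first input frequency `z = (ξ₁, τ₁)`. -/
noncomputable def JminusKernel (s b₀ b : ℝ) (p z : ℝ × ℝ) : ℝ≥0∞ :=
  jbWeight s (z.1 - (p.1 - z.1)) * jbWeight (-b₀) (modulation z) *
    jbWeight (-b) (modulation (p - z))

lemma measurable_JminusKernel (s b₀ b : ℝ) (p : ℝ × ℝ) : Measurable (JminusKernel s b₀ b p) := by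
  unfold JminusKernel
  fun_prop

lemma JminusConv_eq_lintegral_JminusKernel (s b₀ b : ℝ) {F G : ℝ × ℝ → ℝ≥0∞}
    (hF : AEMeasurable F) (hG : AEMeasurable G) (p : ℝ × ℝ) :
    JminusConv s F G p = ∫⁻ z, JminusKernel s b₀ b p z *
      (jbWeight b₀ (modulation z) * F z * (jbWeight b (modulation (p - z)) * G (p - z))) := by
  have cancel_weights (z : ℝ × ℝ) : JminusKernel s b₀ b p z *
      (jbWeight b₀ (modulation z) * F z * (jbWeight b (modulation (p - z)) * G (p - z))) =
      jbWeight s (z.1 - (p.1 - z.1)) * F z * G (p - z) := by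
    calc _ = jbWeight s (z.1 - (p.1 - z.1)) * F z * G (p - z) *
          (jbWeight (-b₀) (modulation z) * jbWeight b₀ (modulation z)) *
          (jbWeight (-b) (modulation (p - z)) * jbWeight b (modulation (p - z))) := by
          unfold JminusKernel
          ring
      _ = _ := by simp only [jbWeight_neg_mul_jbWeight, mul_one]
  have measurable_integrand : AEMeasurable fun z : ℝ × ℝ =>
      jbWeight s (z.1 - (p.1 - z.1)) * F z * G (p - z) :=
    ((Measurable.aemeasurable (by fun_prop)).mul hF).mul
      (hG.comp_quasiMeasurePreserving (quasiMeasurePreserving_sub_left volume p))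
  simp only [cancel_weights]
  exact (lintegral_prod _ measurable_integrand).symm

lemma exists_lintegral_JminusKernel_sq_le {s b₀ b : ℝ} (hs : s ≤ 1 / 2) (hb₀ : 1 / 2 < b₀)
    (hb : 0 ≤ b) (hsb : 1 / 4 + s / 2 < b) :
    ∃ C : ℝ≥0, ∀ p, ∫⁻ z, JminusKernel s b₀ b p z ^ 2 ≤ C := by
  obtain ⟨C, hC⟩ := exists_lintegral_jbWeight_mul_jbWeight_quadratic_le
    (α := 2 * s) (β := 2 * b) (by linarith) (by linarith) (by linarith)
  have finite := (lintegral_jbWeight_lt_top (r := 2 * -b₀) (by linarith)).ne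
  refine ⟨(∫⁻ m, jbWeight (2 * -b₀) m).toNNReal * C, fun p => ?_⟩
  simp only [JminusKernel, mul_pow, jbWeight_sq]
  rw [lintegral_mul_modulation_mul_modulation_sub (by fun_prop) (by fun_prop) (by fun_prop),
    ENNReal.coe_mul, ENNReal.coe_toNNReal finite, ← lintegral_mul_const _ (by fun_prop),
    mul_neg 2 b]
  gcongr
  exact hC _

end Modulation

theorem Jminus_bilinear_estimate_general (s b₀ b : ℝ) (hs : s ≤ 1 / 2) (hb₀ : 1 / 2 < b₀)
    (hb : 0 ≤ b) (hsb : 1 / 4 + s / 2 < b) :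
    ∃ c > (0 : ℝ), ∀ F G : ℝ × ℝ → ℝ≥0∞, AEMeasurable F → AEMeasurable G →
      (∫⁻ p : ℝ × ℝ, JminusConv s F G p ^ 2) ^ ((1 : ℝ) / 2) ≤
        ENNReal.ofReal c * X0norm b₀ F * X0norm b G := by
  obtain ⟨C, hC⟩ := exists_lintegral_JminusKernel_sq_le hs hb₀ hb hsb
  have C_le_C_add_one : (C : ℝ≥0∞) ≤ ENNReal.ofReal (C + 1) := by
    rw [← ENNReal.ofReal_coe_nnreal]
    exact ENNReal.ofReal_le_ofReal (by linarith)
  refine ⟨(C + 1 : ℝ) ^ ((1 : ℝ) / 2), by positivity, fun F G hF hG => ?_⟩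
  simp only [X0norm_eq_lintegral_sq, JminusConv_eq_lintegral_JminusKernel s b₀ b hF hG]
  rw [← ENNReal.ofReal_rpow_of_nonneg (by positivity) (by norm_num), mul_assoc,
    ← ENNReal.mul_rpow_of_nonneg _ _ (by norm_num), ← ENNReal.mul_rpow_of_nonneg _ _ (by norm_num)]
  gcongr
  refine lintegral_sq_lintegral_kernel_mul_le
    (fun p => (measurable_JminusKernel s b₀ b p).aemeasurable)
    (fun p => (hC p).trans C_le_C_add_one) ?_ ?_
  all_goals fun_prop

/-- For `b₀ > 1/2`, `0 ≤ s ≤ 1/2` and `b > 1/4 + s/2`: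
`‖J₋^s(u,v)‖_{L²_{x,t}} ≤ c ‖u‖_{X^+_{0,b₀}} ‖v‖_{X^+_{0,b}}` (on the Fourier side, via
Plancherel, for nonnegative Fourier data). -/
theorem Jminus_bilinear_estimate (s b₀ b : ℝ) (hs0 : 0 ≤ s) (hs : s ≤ 1 / 2)
    (hb₀ : 1 / 2 < b₀) (hb : 1 / 4 + s / 2 < b) :
    ∃ c > (0 : ℝ), ∀ F G : ℝ × ℝ → ℝ≥0∞, Measurable F → Measurable G →
      (∫⁻ p : ℝ × ℝ, JminusConv s F G p ^ 2) ^ ((1 : ℝ) / 2) ≤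
        ENNReal.ofReal c * X0norm b₀ F * X0norm b G := by
  obtain ⟨c, hc, estimate⟩ := Jminus_bilinear_estimate_general s b₀ b hs hb₀ (by linarith) hb
  exact ⟨c, hc, fun F G hF hG => estimate F G hF.aemeasurable hG.aemeasurable⟩
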